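/- Given reals a, c, δ, γ > 0 satisfying (i) c < min(a, δ), (ii) γ ≥ 4a and γ > δ, (iii) δ + (c/δ)·γ ≤ a, suppose f satisfies (H) and (H''), is locally Lipschitz, is constant on [ρ, ∞) for some ρ > 0, and f'(0) < -π/2. Then the equation x'(t) = f(x(t-1)) has an SOP solution with minimal period strictly greater than 4, and also a Kaplan–Yorke solution, i.e., an SOP solution x of minimal period 4 with x(t) = -x(t-2) for all t ∈ ℝ. -/

import Mathlib

open Set Filter

/-- Hypotheses (H): `f` is continuous, satisfies the negative feedback condition,
and is differentiable on a neighborhood of `0` with `f'(0) < 0`. -/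
def HypH (f : ℝ → ℝ) : Prop :=
  Continuous f ∧ (∀ x : ℝ, x ≠ 0 → x * f x < 0) ∧
    (∀ᶠ y in nhds (0 : ℝ), DifferentiableAt ℝ f y) ∧ deriv f 0 < 0

/-- A solution on `[-1,∞)` of the delay equation `x'(t) = f (x (t-1))`. -/
def IsSolOn (f x : ℝ → ℝ) : Prop :=
  ContinuousOn x (Ici (-1)) ∧ ∀ t : ℝ, 0 < t → HasDerivAt x (f (x (t - 1))) t

/-- Membership in the set `K`: `φ(-1) = 0`, `φ` nondecreasing on `[-1,0]`,
continuous there, and `|φ| ≤ M`. -/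
def MemK (M : ℝ) (φ : ℝ → ℝ) : Prop :=
  ContinuousOn φ (Icc (-1) 0) ∧ φ (-1) = 0 ∧ MonotoneOn φ (Icc (-1) 0) ∧
    ∀ s ∈ Icc (-1 : ℝ) 0, |φ s| ≤ M

/-- `T` is the minimal (positive) period of `p`. -/
def MinPeriod {α : Type*} (p : ℝ → α) (T : ℝ) : Prop :=
  0 < T ∧ (∀ t, p (t + T) = p t) ∧
    ∀ T' : ℝ, 0 < T' → (∀ t, p (t + T') = p t) → T ≤ T'

/-- A slowly oscillating periodic (SOP) solution of `x'(t) = f (x (t-1))`: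
a nonconstant periodic differentiable solution any two of whose distinct
zeros are separated by more than `1`. -/
def IsSOP (f p : ℝ → ℝ) : Prop :=
  (∀ t : ℝ, HasDerivAt p (f (p (t - 1))) t) ∧
    (∃ T : ℝ, 0 < T ∧ ∀ t, p (t + T) = p t) ∧
    (∃ t s : ℝ, p t ≠ p s) ∧
    ∀ z z' : ℝ, p z = 0 → p z' = 0 → z ≠ z' → 1 < |z - z'|

/-- A Kaplan–Yorke solution: an SOP solution of minimal period `4`
satisfying `x(t) = -x(t-2)`. -/
def IsKY (f x : ℝ → ℝ) : Prop :=
  IsSOP f x ∧ MinPeriod x 4 ∧ ∀ t : ℝ, x t = -x (t - 2)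

/-- Hypotheses (H') with constants `μ, β, σ`. -/
def HypH' (f : ℝ → ℝ) (μ β σ : ℝ) : Prop :=
  (∀ x : ℝ, |f x| ≤ μ) ∧ ∀ x : ℝ, β ≤ |x| → σ ≤ |f x|

/-- Hypotheses (H'') with constants `a, c, δ, γ`. -/
def HypH'' (f : ℝ → ℝ) (a c δ γ : ℝ) : Prop :=
  (∀ x : ℝ, f (-x) = -f x) ∧ (∀ x ∈ Icc (0 : ℝ) (2 * a), |f x| ≤ γ) ∧
    (∀ x ∈ Icc a (2 * a - c), f x = -γ) ∧ ∀ x ∈ Icc (2 * a) γ, f x = -δ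

/-- The minimal period of `p` equals `z'' - z` for three consecutive zeros
`z < z' < z''` of `p`. -/
def PeriodThreeZeros (p : ℝ → ℝ) : Prop :=
  ∃ z z' z'' : ℝ, z < z' ∧ z' < z'' ∧ p z = 0 ∧ p z' = 0 ∧ p z'' = 0 ∧
    (∀ t, t ∈ Ioo z z' ∪ Ioo z' z'' → p t ≠ 0) ∧ MinPeriod p (z'' - z)

/-!
Both solutions are antiperiodic, `p (t + h) = -p t`, with a single zero in each interval of length
`h`; such a solution is slowly oscillating with minimal period `2h` as soon as `h > 1`.

*Period greater than `4`.* Start with the history `x t = 2a - δ (t + 1)` on `[-1, 0]` and put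
`b = c / δ`. By (iii), `x` stays in `[a, 2a - c]` during the unit interval `[b - 1, b]`, hence falls
with slope `-γ` during the next one, from a value `v ∈ [a, 2a - δ]` to a value below `-2a`. Because
`f` is odd and `γ ≥ 4a`, it then stays in `[-γ, -2a]` for at least a unit of time, until it climbs
with slope `δ` to `-2a` at some time `h - 1 > 1`. From there it continues as the negative of the
initial history, so `x (t + h) = -x t` with `h > 2`.

*Kaplan–Yorke solution.* With `y t = x (t - 1)` and `x (t - 2) = -x t` the equation becomes the
Hamiltonian system `x' = f y`, `y' = -f x`. Let `σ` be the inverse of `x ↦ sign x √(-2 ∫₀ˣ f)` and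
`m = σ'`. On the level curve `(x, y) = (σ (R cos θ), σ (R sin θ))` the angle satisfies
`θ' = 1 / (m (R cos θ) m (R sin θ))`, so the integral of `m (R cos θ) m (R sin θ)` over `[0, π / 2]`
is the quarter period. It is continuous in `R`, equals `-π / (2 f' 0) < 1` at `R = 0`, and is at
least `1` when `σ R = N`, provided that `|f| ≤ N` on `[0, N]`. So it equals `1` for some `R > 0`
with `σ R ≤ N`; here `N = γ`.
-/

/-! ### Antiperiodic solutions -/

lemma exists_int_of_antiperiodic {p : ℝ → ℝ} {h s z : ℝ} (hh : 0 < h)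
    (hp : Function.Antiperiodic p h) (hz : ∀ t ∈ Ico s (s + h), p t = 0 → t = z) {t : ℝ}
    (ht : p t = 0) : ∃ k : ℤ, t = z + k * h := by
  have hmod : p (toIcoMod hh s t) = 0 := by
    rw [toIcoMod, hp.sub_zsmul_eq, ht, smul_zero]
  refine ⟨toIcoDiv hh s t, ?_⟩
  rw [← hz _ (toIcoMod_mem_Ico hh s t) hmod, ← zsmul_eq_mul, toIcoMod_add_toIcoDiv_zsmul]

lemma exists_ne_zero_of_forall_mem_Ico {p : ℝ → ℝ} {h s z : ℝ} (hh : 0 < h)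
    (hz : ∀ t ∈ Ico s (s + h), p t = 0 → t = z) : ∃ t, p t ≠ 0 := by
  by_contra! hp
  have hs := hz s ⟨le_rfl, by linarith⟩ (hp s)
  have hmid := hz (s + h / 2) ⟨by linarith, by linarith⟩ (hp _)
  linarith

lemma minPeriod_two_mul_of_antiperiodic {p : ℝ → ℝ} {h s z : ℝ} (hh : 0 < h)
    (hp : Function.Antiperiodic p h) (hpz : p z = 0)
    (hz : ∀ t ∈ Ico s (s + h), p t = 0 → t = z) : MinPeriod p (2 * h) := by
  refine ⟨by positivity, hp.periodic_two_mul, fun T hT hpT => ?_⟩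
  obtain ⟨k, hk⟩ := exists_int_of_antiperiodic hh hp hz (by rw [hpT, hpz] : p (z + T) = 0)
  obtain rfl : T = k * h := by linarith
  have hk_pos : 0 < k := by exact_mod_cast pos_of_mul_pos_left hT hh.le
  have hk_ne : k ≠ 1 := by
    rintro rfl
    obtain ⟨t, ht⟩ := exists_ne_zero_of_forall_mem_Ico hh hz
    have := hpT t
    rw [Int.cast_one, one_mul, hp] at this
    exact ht (by linarith)
  have hk_two : (2 : ℝ) ≤ k := by exact_mod_cast (by lia : (2 : ℤ) ≤ k)
  gcongr

lemma isSOP_of_antiperiodic {f p : ℝ → ℝ} {h s z : ℝ} (hh : 1 < h)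
    (hsol : ∀ t, HasDerivAt p (f (p (t - 1))) t) (hp : Function.Antiperiodic p h) (hpz : p z = 0)
    (hz : ∀ t ∈ Ico s (s + h), p t = 0 → t = z) : IsSOP f p := by
  have hh0 : 0 < h := by linarith
  refine ⟨hsol, ⟨2 * h, by positivity, hp.periodic_two_mul⟩, ?_, fun z₁ z₂ h₁ h₂ hne => ?_⟩
  · obtain ⟨t, ht⟩ := exists_ne_zero_of_forall_mem_Ico hh0 hz
    exact ⟨t, z, by rwa [hpz]⟩
  · obtain ⟨k₁, rfl⟩ := exists_int_of_antiperiodic hh0 hp hz h₁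
    obtain ⟨k₂, rfl⟩ := exists_int_of_antiperiodic hh0 hp hz h₂
    have hk : k₁ - k₂ ≠ 0 := fun hk => hne (by rw [sub_eq_zero.mp hk])
    have hk_abs : (1 : ℝ) ≤ |(k₁ : ℝ) - k₂| := by exact_mod_cast Int.one_le_abs hk
    calc 1 < h := hh
      _ ≤ |(k₁ : ℝ) - k₂| * h := le_mul_of_one_le_left hh0.le hk_abs
      _ = |z + k₁ * h - (z + k₂ * h)| := by
        rw [← abs_of_pos hh0, ← abs_mul, abs_of_pos hh0]
        ring_nf

/-! ### The delay equation on a half-line -/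

namespace IsSolOn

variable {f x y : ℝ → ℝ} {s t : ℝ}

lemma shift (hx : IsSolOn f x) (hs : 0 ≤ s) : IsSolOn f fun t => x (t + s) := by
  refine ⟨hx.1.comp (by fun_prop) fun t ht => ?_, fun t ht => ?_⟩
  · simp only [mem_Ici] at ht ⊢
    linarith
  · have hderiv := (hx.2 (t + s) (by linarith)).comp_add_const t s
    rwa [show t + s - 1 = t - 1 + s by ring] at hderiv

lemma neg (hf : f.Odd) (hx : IsSolOn f x) : IsSolOn f fun t => -x t :=
  ⟨hx.1.neg, fun t ht => (hx.2 t ht).neg.congr_deriv (hf _).symm⟩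

lemma sub_mem_Icc {m M : ℝ} (hx : IsSolOn f x) (hs : 0 ≤ s) (hst : s ≤ t)
    (hslope : ∀ u ∈ Icc (s - 1) (t - 1), f (x u) ∈ Icc m M) :
    x t - x s ∈ Icc (m * (t - s)) (M * (t - s)) := by
  have hcont : ContinuousOn x (Icc s t) :=
    hx.1.mono fun u hu => by simp only [mem_Ici]; linarith [hu.1]
  have hderiv : ∀ u ∈ interior (Icc s t), HasDerivAt x (f (x (u - 1))) u := by
    rw [interior_Icc]
    exact fun u hu => hx.2 u (hs.trans_lt hu.1)
  have hdiff : DifferentiableOn ℝ x (interior (Icc s t)) := fun u hu =>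
    (hderiv u hu).differentiableAt.differentiableWithinAt
  have hmem : ∀ u ∈ interior (Icc s t), deriv x u ∈ Icc m M := fun u hu => by
    rw [(hderiv u hu).deriv]
    have hu' := interior_subset hu
    exact hslope _ ⟨by linarith [hu'.1], by linarith [hu'.2]⟩
  exact ⟨(convex_Icc s t).mul_sub_le_image_sub_of_le_deriv hcont hdiff (fun u hu => (hmem u hu).1)
      s ⟨le_rfl, hst⟩ t ⟨hst, le_rfl⟩ hst,
    (convex_Icc s t).image_sub_le_mul_sub_of_deriv_le hcont hdiff (fun u hu => (hmem u hu).2)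
      s ⟨le_rfl, hst⟩ t ⟨hst, le_rfl⟩ hst⟩

lemma eq_add_mul_of_forall_eq {K : ℝ} (hx : IsSolOn f x) (hs : 0 ≤ s) (hst : s ≤ t)
    (hK : ∀ u ∈ Icc (s - 1) (t - 1), f (x u) = K) : x t = x s + K * (t - s) := by
  have := hx.sub_mem_Icc hs hst (m := K) (M := K) fun u hu => by simp [hK u hu]
  rw [Icc_self, mem_singleton_iff] at this
  linarith

lemma eq_add_integral (hf : Continuous f) (hx : IsSolOn f x) (hs : 0 ≤ s) (hst : s ≤ t) :
    x t = x s + ∫ u in s..t, f (x (u - 1)) := by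
  have hdelay : ContinuousOn (fun u => f (x (u - 1))) (Icc s t) :=
    hf.comp_continuousOn <| hx.1.comp (by fun_prop) fun u hu => by
      simp only [mem_Ici]
      linarith [hu.1]
  rw [intervalIntegral.integral_eq_sub_of_hasDerivAt_of_le hst
    (hx.1.mono fun u hu => by simp only [mem_Ici]; linarith [hu.1])
    (fun u hu => hx.2 u (hs.trans_lt hu.1)) (hdelay.intervalIntegrable_of_Icc hst)]
  ring

lemma eqOn_Ici (hf : Continuous f) (hx : IsSolOn f x) (hy : IsSolOn f y)
    (hxy : EqOn x y (Icc (-1) 0)) : EqOn x y (Ici (-1)) := by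
  have hsteps : ∀ n : ℕ, EqOn x y (Icc (-1) n) := by
    intro n
    induction n with
    | zero => simpa using hxy
    | succ n ih =>
      intro t ht
      rcases le_total t 0 with ht0 | ht0
      · exact hxy ⟨ht.1, ht0⟩
      · rw [hx.eq_add_integral hf le_rfl ht0, hy.eq_add_integral hf le_rfl ht0,
          hxy ⟨by norm_num, le_rfl⟩]
        congr 1
        refine intervalIntegral.integral_congr fun u hu => ?_
        rw [uIcc_of_le ht0] at hu
        have htn := ht.2
        push_cast at htn
        exact congrArg f (ih ⟨by linarith [hu.1], by linarith [hu.2]⟩)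
  intro t ht
  obtain ⟨n, hn⟩ := exists_nat_ge t
  exact hsteps n ⟨ht, hn⟩

lemma eq_add_mul_of_line_subset {J : Set ℝ} {K τ e : ℝ} (hx : IsSolOn f x) (hτ : 0 ≤ τ)
    (hJ : ∀ y ∈ J, f y = K) (hpast : ∀ t ∈ Icc (τ - 1) τ, x t ∈ J)
    (hline : ∀ t ∈ Icc τ e, x τ + K * (t - τ) ∈ J) (ht : t ∈ Icc τ (e + 1)) :
    x t = x τ + K * (t - τ) := by
  have hsteps : ∀ n : ℕ, ∀ t ∈ Icc τ (e + 1), t ≤ τ + n → x t = x τ + K * (t - τ) := by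
    intro n
    induction n with
    | zero =>
      intro t ht htn
      obtain rfl : t = τ := le_antisymm (by simpa using htn) ht.1
      ring
    | succ n ih =>
      intro t ht htn
      push_cast at htn
      refine hx.eq_add_mul_of_forall_eq hτ ht.1 fun u hu => hJ _ ?_
      rcases le_total u τ with huτ | huτ
      · exact hpast u ⟨hu.1, huτ⟩
      · rw [ih u ⟨huτ, by linarith [hu.2, ht.2]⟩ (by linarith [hu.2])]
        exact hline u ⟨huτ, by linarith [hu.2, ht.2]⟩
  obtain ⟨n, hn⟩ := exists_nat_ge (t - τ)
  exact hsteps n t ht (by linarith)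

lemma exists_periodic_extension {T : ℝ} (hT : 0 < T) (hx : IsSolOn f x)
    (hper : ∀ t, -1 ≤ t → x (t + T) = x t) :
    ∃ p : ℝ → ℝ, (∀ t, HasDerivAt p (f (p (t - 1))) t) ∧ Function.Periodic p T ∧
      EqOn p x (Ici (-1)) := by
  have hnat : ∀ n : ℕ, ∀ t, -1 ≤ t → x (t + n * T) = x t := by
    intro n t ht
    induction n with
    | zero => simp
    | succ n ih =>
      rw [Nat.cast_succ, add_one_mul, ← add_assoc, hper _ (by nlinarith [n.cast_nonneg (α := ℝ)]),
        ih]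
  set p : ℝ → ℝ := fun t => x (toIcoMod hT (-1) t)
  have hp_per : Function.Periodic p T := (toIcoMod_periodic hT (-1)).comp x
  have hpx : EqOn p x (Ici (-1)) := by
    intro t ht
    have hmod := toIcoMod_mem_Ico hT (-1) t
    have hdecomp := toIcoMod_add_toIcoDiv_zsmul hT (-1) t
    rw [zsmul_eq_mul] at hdecomp
    have hdiv : 0 ≤ toIcoDiv hT (-1) t := by
      have : -1 * T < toIcoDiv hT (-1) t * T := by linarith [hmod.2, mem_Ici.mp ht]
      have : (-1 : ℝ) < toIcoDiv hT (-1) t := lt_of_mul_lt_mul_right this hT.le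
      have : -1 < toIcoDiv hT (-1) t := by exact_mod_cast this
      lia
    obtain ⟨n, hn⟩ := Int.eq_ofNat_of_zero_le hdiv
    rw [hn, Int.cast_natCast] at hdecomp
    calc p t = x (toIcoMod hT (-1) t + n * T) := (hnat n _ hmod.1).symm
      _ = x t := by rw [hdecomp]
  refine ⟨p, fun t => ?_, hp_per, hpx⟩
  obtain ⟨n, hn⟩ := exists_nat_gt (-t / T)
  rw [div_lt_iff₀ hT] at hn
  have hshift : ∀ u, -1 ≤ u + n * T → p u = x (u + n * T) := fun u hu => by
    rw [← hpx hu, hp_per.nat_mul n]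
  have hsol := (hx.2 (t + n * T) (by linarith)).comp_add_const t (n * T)
  rw [hshift (t - 1) (by linarith), show t - 1 + n * T = t + n * T - 1 by ring]
  refine hsol.congr_of_eventuallyEq ?_
  filter_upwards [lt_mem_nhds (show -1 - n * T < t by linarith)] with u hu
  exact hshift u (by linarith)

lemma exists_antiperiodic_extension {h : ℝ} (hh : 0 < h) (hx : IsSolOn f x)
    (hanti : ∀ t, -1 ≤ t → x (t + h) = -x t) :
    ∃ p : ℝ → ℝ, (∀ t, HasDerivAt p (f (p (t - 1))) t) ∧ Function.Antiperiodic p h ∧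
      EqOn p x (Ici (-1)) := by
  obtain ⟨p, hsol, hper, hpx⟩ := hx.exists_periodic_extension (T := 2 * h) (by positivity)
    fun t ht => by rw [two_mul, ← add_assoc, hanti _ (by linarith), hanti t ht, neg_neg]
  refine ⟨p, hsol, fun t => ?_, hpx⟩
  obtain ⟨n, hn⟩ := exists_nat_gt ((-1 - t) / (2 * h))
  rw [div_lt_iff₀ (by positivity)] at hn
  rw [← hper.nat_mul n (t + h), ← hper.nat_mul n t, add_right_comm, hpx (by simp; linarith),
    hpx (by simp; linarith), hanti _ (by linarith)]

end IsSolOn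

/-- The operator of the method of steps: its fixed points extend the history `φ` on `(-∞, 0]` to a
solution of the delay equation for positive times. -/
noncomputable def delayStep (f φ y : ℝ → ℝ) (t : ℝ) : ℝ :=
  φ (min t 0) + ∫ u in (0 : ℝ)..max t 0, f (y (u - 1))

section MethodOfSteps

variable {f φ y z : ℝ → ℝ} {t : ℝ}

lemma delayStep_of_nonpos (ht : t ≤ 0) : delayStep f φ y t = φ t := by
  simp [delayStep, ht]

lemma continuous_delayStep (hf : Continuous f) (hφ : Continuous φ) (hy : Continuous y) :
    Continuous (delayStep f φ y) := by
  have hdelay : Continuous fun u => f (y (u - 1)) := by fun_prop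
  have hprim := intervalIntegral.continuous_primitive (μ := MeasureTheory.volume)
    (fun a b => hdelay.intervalIntegrable a b) 0
  exact (hφ.comp (continuous_id.min continuous_const)).add
    (hprim.comp (continuous_id.max continuous_const))

lemma eqOn_delayStep {T : ℝ} (hT : -1 ≤ T) (hyz : EqOn y z (Iic T)) :
    EqOn (delayStep f φ y) (delayStep f φ z) (Iic (T + 1)) := by
  intro t ht
  simp only [delayStep]
  congr 1
  refine intervalIntegral.integral_congr fun u hu => ?_
  rw [uIcc_of_le (le_max_right t 0)] at hu
  have huT : u ≤ T + 1 := hu.2.trans (max_le ht (by linarith))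
  simp only [hyz (show u - 1 ∈ Iic T by simp only [mem_Iic]; linarith)]

lemma hasDerivAt_delayStep (hf : Continuous f) (hy : Continuous y) (ht : 0 < t) :
    HasDerivAt (delayStep f φ y) (f (y (t - 1))) t := by
  have hdelay : Continuous fun u => f (y (u - 1)) := by fun_prop
  refine ((hdelay.integral_hasStrictDerivAt 0 t).hasDerivAt.const_add
    (φ 0)).congr_of_eventuallyEq ?_
  filter_upwards [lt_mem_nhds ht] with u hu
  rw [delayStep, min_eq_right hu.le, max_eq_left hu.le]

lemma exists_fixedPoint_delayStep (hf : Continuous f) (hφ : Continuous φ) :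
    ∃ x, Continuous x ∧ delayStep f φ x = x := by
  set X : ℕ → ℝ → ℝ := fun n => (delayStep f φ)^[n] φ
  have hX_succ : ∀ n, X (n + 1) = delayStep f φ (X n) := fun n =>
    Function.iterate_succ_apply' _ n φ
  have hX_cont : ∀ n, Continuous (X n) := fun n => by
    induction n with
    | zero => exact hφ
    | succ n ih => exact hX_succ n ▸ continuous_delayStep hf hφ ih
  have hX_step : ∀ n : ℕ, EqOn (X (n + 1)) (X n) (Iic n) := fun n => by
    induction n with
    | zero => exact fun t ht => delayStep_of_nonpos (by simpa using ht)
    | succ n ih =>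
      simpa only [← hX_succ, Nat.cast_succ] using
        eqOn_delayStep (f := f) (φ := φ) (by linarith [n.cast_nonneg (α := ℝ)]) ih
  have hX_le : ∀ {n k : ℕ}, n ≤ k → EqOn (X k) (X n) (Iic n) := fun {n k} hnk => by
    induction k, hnk using Nat.le_induction with
    | base => exact fun _ _ => rfl
    | succ k hnk ih =>
      exact ((hX_step k).mono (Iic_subset_Iic.mpr (by exact_mod_cast hnk))).trans ih
  set x : ℝ → ℝ := fun t => X ⌈t⌉₊ t
  have hxX : ∀ n : ℕ, EqOn x (X n) (Iic n) := fun n t ht =>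
    (hX_le (Nat.ceil_le.mpr ht) (Nat.le_ceil t)).symm
  refine ⟨x, continuous_iff_continuousAt.mpr fun t => ?_, funext fun t => ?_⟩
  · obtain ⟨n, hn⟩ := exists_nat_gt t
    exact (hX_cont n).continuousAt.congr ((hxX n).symm.eventuallyEq_of_mem (Iic_mem_nhds hn))
  · obtain ⟨n, hn⟩ := exists_nat_ge t
    have hn' : t ≤ n + 1 := by linarith
    rw [eqOn_delayStep (by linarith [n.cast_nonneg (α := ℝ)]) (hxX n) hn', ← hX_succ,
      hxX (n + 1) (by exact_mod_cast hn')]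

lemma exists_isSolOn (hf : Continuous f) (hφ : Continuous φ) :
    ∃ x, IsSolOn f x ∧ EqOn x φ (Icc (-1) 0) := by
  obtain ⟨x, hxc, hx⟩ := exists_fixedPoint_delayStep hf hφ
  refine ⟨x, ⟨hxc.continuousOn, fun t ht => ?_⟩, fun t ht => ?_⟩
  · simpa only [hx] using hasDerivAt_delayStep (φ := φ) hf hxc ht
  · rw [← hx, delayStep_of_nonpos ht.2]

end MethodOfSteps

/-! ### Kaplan–Yorke solutions -/

lemma exists_hasDerivAt_inverse {F F' : ℝ → ℝ} (hF : ∀ x, HasDerivAt F (F' x) x)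
    (hpos : ∀ x, 0 < F' x) (hsurj : F.Surjective) :
    ∃ G : ℝ → ℝ, G.LeftInverse F ∧ G.RightInverse F ∧ Continuous G ∧
      ∀ y, HasDerivAt G (F' (G y))⁻¹ y := by
  set e := (strictMono_of_hasDerivAt_pos hF hpos).orderIsoOfSurjective F hsurj
  refine ⟨e.symm, e.symm_apply_apply, e.apply_symm_apply, e.symm.continuous, fun y => ?_⟩
  exact (hF _).of_local_left_inverse e.symm.continuous.continuousAt (hpos _).ne'
    (.of_forall e.apply_symm_apply)

/-- The weighted mean `2 ∫₀¹ v ℓ(v x) dv` of the gain `ℓ` of the feedback `x ↦ -x ℓ(x)`. It equals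
`2 x⁻² ∫₀ˣ u ℓ(u) du` for `x ≠ 0`, and the chosen form also makes sense at `x = 0`. -/
noncomputable def meanGain (ℓ : ℝ → ℝ) (x : ℝ) : ℝ := 2 * ∫ v in (0 : ℝ)..1, v * ℓ (v * x)

/-- The signed square root of the potential energy `2 ∫₀ˣ u ℓ(u) du`: in the coordinates
`(morseCoord ℓ x, morseCoord ℓ y)` the energy levels of the Hamiltonian system
`x' = -y ℓ(y)`, `y' = x ℓ(x)` are circles. -/
noncomputable def morseCoord (ℓ : ℝ → ℝ) (x : ℝ) : ℝ := x * √(meanGain ℓ x)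

section Morse

variable {ℓ : ℝ → ℝ} {ε x : ℝ}

lemma continuous_meanGain (hℓ : Continuous ℓ) : Continuous (meanGain ℓ) :=
  continuous_const.mul <|
    intervalIntegral.continuous_parametric_intervalIntegral_of_continuous' (by fun_prop) 0 1

lemma meanGain_zero : meanGain ℓ 0 = ℓ 0 := by
  simp [meanGain]

lemma meanGain_even (hℓ : ℓ.Even) : (meanGain ℓ).Even := fun x => by
  simp only [meanGain, mul_neg, hℓ _]

lemma le_meanGain (hℓ : Continuous ℓ) (hε : ∀ x, ε ≤ ℓ x) (x : ℝ) : ε ≤ meanGain ℓ x := by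
  have hint : ∫ v in (0 : ℝ)..1, v * ε ≤ ∫ v in (0 : ℝ)..1, v * ℓ (v * x) := by
    refine intervalIntegral.integral_mono_on zero_le_one
      (Continuous.intervalIntegrable (by fun_prop) _ _)
      (Continuous.intervalIntegrable (by fun_prop) _ _) fun v hv => ?_
    exact mul_le_mul_of_nonneg_left (hε _) hv.1
  rw [intervalIntegral.integral_mul_const, integral_id] at hint
  rw [meanGain]
  linarith

lemma sq_mul_meanGain : x ^ 2 * meanGain ℓ x = 2 * ∫ u in (0 : ℝ)..x, u * ℓ u := by
  have hsubst := intervalIntegral.mul_integral_comp_mul_right (a := 0) (b := 1)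
    (f := fun u => u * ℓ u) x
  have hpull : ∫ v in (0 : ℝ)..1, v * x * ℓ (v * x) = x * ∫ v in (0 : ℝ)..1, v * ℓ (v * x) := by
    rw [← intervalIntegral.integral_const_mul]
    congr with v
    ring
  rw [zero_mul, one_mul, hpull] at hsubst
  rw [meanGain, ← hsubst]
  ring

lemma hasDerivAt_meanGain (hℓ : Continuous ℓ) (hx : x ≠ 0) :
    HasDerivAt (meanGain ℓ) (2 * (ℓ x - meanGain ℓ x) / x) x := by
  have hprim : HasDerivAt (fun y => ∫ u in (0 : ℝ)..y, u * ℓ u) (x * ℓ x) x :=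
    ((continuous_id.mul hℓ).integral_hasStrictDerivAt 0 x).hasDerivAt
  have hquot := (hprim.const_mul 2).div (hasDerivAt_pow 2 x) (by positivity)
  refine (hquot.congr_of_eventuallyEq ?_).congr_deriv ?_
  · filter_upwards [eventually_ne_nhds hx] with y hy
    simp only [Pi.div_apply]
    rw [← sq_mul_meanGain, mul_div_cancel_left₀ _ (pow_ne_zero 2 hy)]
  · rw [← sq_mul_meanGain]
    field_simp
    push_cast
    ring

lemma hasDerivAt_morseCoord (hℓ : Continuous ℓ) (hpos : 0 < meanGain ℓ x) :
    HasDerivAt (morseCoord ℓ) (ℓ x / √(meanGain ℓ x)) x := by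
  rcases eq_or_ne x 0 with rfl | hx
  · rw [meanGain_zero, Real.div_sqrt, hasDerivAt_iff_tendsto_slope]
    have hlim := ((continuous_meanGain hℓ).sqrt.tendsto 0).mono_left
      (nhdsWithin_le_nhds (s := {0}ᶜ))
    rw [meanGain_zero] at hlim
    refine hlim.congr' ?_
    filter_upwards [self_mem_nhdsWithin] with y hy
    have hy0 : y ≠ 0 := hy
    simp [slope_def_field, morseCoord, hy0]
  · have hsqrt := (hasDerivAt_meanGain hℓ hx).sqrt hpos.ne'
    refine ((hasDerivAt_id x).mul hsqrt).congr_deriv ?_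
    have hsq := Real.sq_sqrt hpos.le
    have := (Real.sqrt_pos.mpr hpos).ne'
    field_simp
    simp only [id, hsq]
    ring

lemma morseCoord_odd (hℓ : ℓ.Even) : (morseCoord ℓ).Odd := fun x => by
  rw [morseCoord, morseCoord, meanGain_even hℓ, neg_mul]

lemma surjective_morseCoord (hℓ : Continuous ℓ) (hεpos : 0 < ε) (hε : ∀ x, ε ≤ ℓ x) :
    (morseCoord ℓ).Surjective := by
  have hcont : Continuous (morseCoord ℓ) := continuous_id.mul (continuous_meanGain hℓ).sqrt
  have hsqrt : ∀ x, √ε ≤ √(meanGain ℓ x) := fun x => Real.sqrt_le_sqrt (le_meanGain hℓ hε x)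
  have hε' : 0 < √ε := Real.sqrt_pos.mpr hεpos
  refine hcont.surjective ?_ ?_
  · refine tendsto_atTop_mono' _ ?_ (tendsto_id.atTop_mul_const hε')
    filter_upwards [eventually_ge_atTop 0] with x hx
    exact mul_le_mul_of_nonneg_left (hsqrt x) hx
  · refine tendsto_atBot_mono' _ ?_ (tendsto_id.atBot_mul_const hε')
    filter_upwards [eventually_le_atBot 0] with x hx
    exact mul_le_mul_of_nonpos_left (hsqrt x) hx

end Morse

/-- `σ` is a `C¹` change of variables, with derivative `m`, that turns the potential energy
`∫₀ˣ u ℓ(u) du` into `w² / 2` under `x = σ(w)`; the fields `map_mul_gain` and `gain_mul_deriv_sq`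
are the first derivative of this identity and the second one at `0`. -/
structure IsStraightening (ℓ σ m : ℝ → ℝ) : Prop where
  hasDerivAt : ∀ w, HasDerivAt σ (m w) w
  continuous_deriv : Continuous m
  deriv_pos : ∀ w, 0 < m w
  deriv_even : m.Even
  odd : σ.Odd
  surjective : σ.Surjective
  map_mul_gain : ∀ w, σ w * ℓ (σ w) * m w = w
  gain_mul_deriv_sq : ℓ 0 * m 0 ^ 2 = 1

lemma exists_isStraightening {ℓ : ℝ → ℝ} {ε : ℝ} (hℓ : Continuous ℓ) (heven : ℓ.Even)
    (hεpos : 0 < ε) (hε : ∀ x, ε ≤ ℓ x) : ∃ σ m, IsStraightening ℓ σ m := by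
  have hℓ_pos : ∀ x, 0 < ℓ x := fun x => hεpos.trans_le (hε x)
  have hq_pos : ∀ x, 0 < meanGain ℓ x := fun x => hεpos.trans_le (le_meanGain hℓ hε x)
  have hsqrt_pos : ∀ x, 0 < √(meanGain ℓ x) := fun x => Real.sqrt_pos.mpr (hq_pos x)
  obtain ⟨σ, hleft, hright, hσ_cont, hσ_deriv⟩ := exists_hasDerivAt_inverse
    (fun x => hasDerivAt_morseCoord hℓ (hq_pos x)) (fun x => div_pos (hℓ_pos x) (hsqrt_pos x))
    (surjective_morseCoord hℓ hεpos hε)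
  have hodd : σ.Odd := fun w => by
    rw [← hleft (-σ w), morseCoord_odd heven, hright w]
  have hσ0 : σ 0 = 0 := hodd.map_zero
  refine ⟨σ, fun w => √(meanGain ℓ (σ w)) / ℓ (σ w), ?_⟩
  exact
    { hasDerivAt := fun w => by simpa only [inv_div] using hσ_deriv w
      continuous_deriv := ((continuous_meanGain hℓ).comp hσ_cont).sqrt.div₀
        (hℓ.comp hσ_cont) fun w => (hℓ_pos _).ne'
      deriv_pos := fun w => div_pos (hsqrt_pos _) (hℓ_pos _)
      deriv_even := fun w => by simp only [hodd w, meanGain_even heven _, heven _]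
      odd := hodd
      surjective := hleft.surjective
      map_mul_gain := fun w => by
        rw [mul_assoc, mul_div_cancel₀ _ (hℓ_pos _).ne']
        exact hright w
      gain_mul_deriv_sq := by
        have := hℓ_pos 0
        rw [hσ0, meanGain_zero, div_pow, Real.sq_sqrt this.le]
        field_simp }

/-- The time in which the solution `(σ (R cos θ), σ (R sin θ))` of the straightened Hamiltonian
system on the energy level `R² / 2` makes a quarter turn. -/
noncomputable def quarterPeriod (m : ℝ → ℝ) (R : ℝ) : ℝ :=
  ∫ θ in (0 : ℝ)..Real.pi / 2, m (R * Real.cos θ) * m (R * Real.sin θ)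

namespace IsStraightening

variable {ℓ σ m : ℝ → ℝ} {M N R : ℝ}

lemma strictMono (hσ : IsStraightening ℓ σ m) : StrictMono σ :=
  strictMono_of_hasDerivAt_pos hσ.hasDerivAt hσ.deriv_pos

lemma map_mul_gain_eq_div (hσ : IsStraightening ℓ σ m) (w : ℝ) : σ w * ℓ (σ w) = w / m w :=
  eq_div_of_mul_eq (hσ.deriv_pos w).ne' (hσ.map_mul_gain w)

lemma abs_map_le (hσ : IsStraightening ℓ σ m) {w : ℝ} (hw : |w| ≤ R) : |σ w| ≤ σ R := by
  rw [abs_le] at hw ⊢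
  rw [← hσ.odd]
  exact ⟨hσ.strictMono.monotone hw.1, hσ.strictMono.monotone hw.2⟩

lemma continuous_quarterPeriod (hσ : IsStraightening ℓ σ m) : Continuous (quarterPeriod m) := by
  have hm := hσ.continuous_deriv
  exact intervalIntegral.continuous_parametric_intervalIntegral_of_continuous' (by fun_prop) _ _

lemma quarterPeriod_zero (hσ : IsStraightening ℓ σ m) :
    quarterPeriod m 0 = Real.pi / (2 * ℓ 0) := by
  have hm := hσ.gain_mul_deriv_sq
  have hℓ : ℓ 0 ≠ 0 := left_ne_zero_of_mul_eq_one hm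
  simp only [quarterPeriod, zero_mul, intervalIntegral.integral_const, smul_eq_mul, sub_zero]
  field_simp
  linarith

/-- On the arc, `R cos θ ≤ M m(R cos θ)`, and `R cos θ · m(R sin θ)` is the derivative of
`σ(R sin θ)`. -/
lemma map_le_mul_quarterPeriod (hσ : IsStraightening ℓ σ m) (hM : ∀ x ∈ Icc 0 N, x * ℓ x ≤ M)
    (hR : 0 ≤ R) (hRN : σ R ≤ N) : σ R ≤ M * quarterPeriod m R := by
  have hm := hσ.continuous_deriv
  have hderiv : ∀ θ, HasDerivAt (fun θ => σ (R * Real.sin θ))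
      (m (R * Real.sin θ) * (R * Real.cos θ)) θ := fun θ =>
    (hσ.hasDerivAt _).comp θ ((Real.hasDerivAt_sin θ).const_mul R)
  have hσ_eq : ∫ θ in (0 : ℝ)..Real.pi / 2, m (R * Real.sin θ) * (R * Real.cos θ) = σ R := by
    rw [intervalIntegral.integral_eq_sub_of_hasDerivAt (fun θ _ => hderiv θ)
      (Continuous.intervalIntegrable (by fun_prop) _ _)]
    simp [hσ.odd.map_zero]
  rw [← hσ_eq, quarterPeriod, ← intervalIntegral.integral_const_mul]
  refine intervalIntegral.integral_mono_on (by positivity)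
    (Continuous.intervalIntegrable (by fun_prop) _ _)
    (Continuous.intervalIntegrable (by fun_prop) _ _) fun θ hθ => ?_
  have hcos : 0 ≤ Real.cos θ :=
    Real.cos_nonneg_of_neg_pi_div_two_le_of_le (by linarith [hθ.1, Real.pi_pos]) hθ.2
  have hmem : σ (R * Real.cos θ) ∈ Icc 0 N := by
    rw [← hσ.odd.map_zero]
    exact ⟨hσ.strictMono.monotone (by positivity),
      (hσ.strictMono.monotone (mul_le_of_le_one_right hR (Real.cos_le_one θ))).trans hRN⟩
  have hbound := hM _ hmem
  rw [hσ.map_mul_gain_eq_div, div_le_iff₀ (hσ.deriv_pos _)] at hbound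
  calc m (R * Real.sin θ) * (R * Real.cos θ)
      ≤ m (R * Real.sin θ) * (M * m (R * Real.cos θ)) :=
        mul_le_mul_of_nonneg_left hbound (hσ.deriv_pos _).le
    _ = M * (m (R * Real.cos θ) * m (R * Real.sin θ)) := by ring

lemma exists_quarterPeriod_eq_one (hσ : IsStraightening ℓ σ m) (hN : 0 < N)
    (hℓN : ∀ x ∈ Icc 0 N, x * ℓ x ≤ N) (hunstable : Real.pi / 2 < ℓ 0) :
    ∃ R, 0 < R ∧ σ R ≤ N ∧ quarterPeriod m R = 1 := by
  obtain ⟨R₁, hR₁⟩ := hσ.surjective N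
  have hR₁_pos : 0 < R₁ := by
    rwa [← hσ.strictMono.lt_iff_lt, hσ.odd.map_zero, hR₁]
  have hlow : quarterPeriod m 0 < 1 := by
    rw [hσ.quarterPeriod_zero, div_lt_one (by linarith [Real.pi_pos])]
    linarith
  have hhigh : 1 ≤ quarterPeriod m R₁ := by
    have := hσ.map_le_mul_quarterPeriod hℓN hR₁_pos.le hR₁.le
    rw [hR₁] at this
    exact (le_mul_iff_one_le_right hN).mp this
  obtain ⟨R, hR, hR_one⟩ := intermediate_value_Ioc hR₁_pos.le
    hσ.continuous_quarterPeriod.continuousOn ⟨hlow, hhigh⟩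
  exact ⟨R, hR.1, hR₁ ▸ hσ.strictMono.monotone hR.2, hR_one⟩

end IsStraightening

lemma exists_hasDerivAt_inv_comp_of_periodic {h : ℝ → ℝ} {L : ℝ} (hcont : Continuous h)
    (hpos : ∀ θ, 0 < h θ) (hper : h.Periodic L) (hL : 0 < L) :
    ∃ Θ : ℝ → ℝ, Θ 0 = 0 ∧ (∀ t, HasDerivAt Θ (h (Θ t))⁻¹ t) ∧
      ∀ t, Θ (t + ∫ θ in (0 : ℝ)..L, h θ) = Θ t + L := by
  set H : ℝ → ℝ := fun θ => ∫ η in (0 : ℝ)..θ, h η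
  have hint : ∀ a b, IntervalIntegrable h MeasureTheory.volume a b :=
    fun a b => hcont.intervalIntegrable a b
  have hH : ∀ θ, HasDerivAt H (h θ) θ := fun θ => (hcont.integral_hasStrictDerivAt 0 θ).hasDerivAt
  have hH_surj : H.Surjective :=
    (continuous_iff_continuousAt.mpr fun θ => (hH θ).continuousAt).surjective
      (hper.tendsto_atTop_intervalIntegral_of_pos' (hint 0 L) hpos hL)
      (hper.tendsto_atBot_intervalIntegral_of_pos' (hint 0 L) hpos hL)
  have hH_add : ∀ θ, H (θ + L) = H θ + H L := fun θ => by
    have hsplit := intervalIntegral.integral_add_adjacent_intervals (hint 0 θ) (hint θ (θ + L))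
    rw [hper.intervalIntegral_add_eq θ 0, zero_add] at hsplit
    exact hsplit.symm
  obtain ⟨Θ, hleft, hright, -, hΘ⟩ := exists_hasDerivAt_inverse hH hpos hH_surj
  refine ⟨Θ, ?_, hΘ, fun t => ?_⟩
  · simpa [H] using hleft 0
  · rw [← hleft (Θ t + L), hH_add, hright]

namespace IsStraightening

variable {ℓ σ m : ℝ → ℝ} {R : ℝ}

lemma exists_angle (hσ : IsStraightening ℓ σ m) (hquarter : quarterPeriod m R = 1) :
    ∃ Θ : ℝ → ℝ, Θ 0 = 0 ∧ StrictMono Θ ∧ (∀ t, Θ (t + 1) = Θ t + Real.pi / 2) ∧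
      ∀ t, HasDerivAt Θ (m (R * Real.cos (Θ t)) * m (R * Real.sin (Θ t)))⁻¹ t := by
  have hm := hσ.continuous_deriv
  have hpos : ∀ θ, 0 < m (R * Real.cos θ) * m (R * Real.sin θ) := fun θ =>
    mul_pos (hσ.deriv_pos _) (hσ.deriv_pos _)
  obtain ⟨Θ, hΘ0, hΘ, hΘ_add⟩ := exists_hasDerivAt_inv_comp_of_periodic (L := Real.pi / 2)
    (h := fun θ => m (R * Real.cos θ) * m (R * Real.sin θ)) (by fun_prop) hpos
    (fun θ => by
      simp only [Real.cos_add_pi_div_two, Real.sin_add_pi_div_two, mul_neg, hσ.deriv_even _,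
        mul_comm])
    (by positivity)
  rw [← quarterPeriod, hquarter] at hΘ_add
  exact ⟨Θ, hΘ0, strictMono_of_hasDerivAt_pos hΘ fun t => inv_pos.mpr (hpos _), hΘ_add, hΘ⟩

lemma hasDerivAt_map_cos_angle (hσ : IsStraightening ℓ σ m) {Θ p : ℝ → ℝ} {t : ℝ}
    (hΘ_add : Θ (t - 1 + 1) = Θ (t - 1) + Real.pi / 2)
    (hΘ : HasDerivAt Θ (m (R * Real.cos (Θ t)) * m (R * Real.sin (Θ t)))⁻¹ t)
    (hp : ∀ s, p s = σ (R * Real.cos (Θ s))) :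
    HasDerivAt p (-(p (t - 1) * ℓ (p (t - 1)))) t := by
  have hdelay : Θ (t - 1) = Θ t - Real.pi / 2 := by
    rw [sub_add_cancel] at hΘ_add
    linarith
  rw [funext hp]
  simp only [hdelay, Real.cos_sub_pi_div_two, hσ.map_mul_gain_eq_div]
  refine ((hσ.hasDerivAt _).comp t (((Real.hasDerivAt_cos _).comp t hΘ).const_mul R)).congr_deriv ?_
  have := (hσ.deriv_pos (R * Real.cos (Θ t))).ne'
  have := (hσ.deriv_pos (R * Real.sin (Θ t))).ne'
  simp only [Function.comp_apply]
  field_simp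

lemma exists_isKY (hσ : IsStraightening ℓ σ m) (hR : 0 < R) (hquarter : quarterPeriod m R = 1) :
    ∃ p, IsKY (fun x => -(x * ℓ x)) p ∧ ∀ t, |p t| ≤ σ R := by
  obtain ⟨Θ, hΘ0, hΘ_mono, hΘ_add, hΘ⟩ := hσ.exists_angle hquarter
  have hΘ1 : Θ 1 = Real.pi / 2 := by simpa [hΘ0] using hΘ_add 0
  have hΘ2 : ∀ t, Θ (t + 2) = Θ t + Real.pi := fun t => by
    rw [← one_add_one_eq_two, ← add_assoc, hΘ_add, hΘ_add]
    ring
  set p : ℝ → ℝ := fun t => σ (R * Real.cos (Θ t)) with hp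
  have hsol : ∀ t, HasDerivAt p (-(p (t - 1) * ℓ (p (t - 1)))) t := fun t =>
    hσ.hasDerivAt_map_cos_angle (hΘ_add _) (hΘ t) fun _ => rfl
  have hanti : Function.Antiperiodic p 2 := fun t => by
    simp only [hp, hΘ2, Real.cos_add_pi, mul_neg, hσ.odd _]
  have hp1 : p 1 = 0 := by simp [hp, hΘ1, hσ.odd.map_zero]
  have hzero : ∀ t ∈ Ico (0 : ℝ) (0 + 2), p t = 0 → t = 1 := fun t ht hpt => by
    have hcos : Real.cos (Θ t) = Real.cos (Θ 1) := by
      rw [hΘ1, Real.cos_pi_div_two]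
      rw [← hσ.odd.map_zero] at hpt
      exact (mul_eq_zero_iff_left hR.ne').mp (hσ.strictMono.injective hpt)
    have hΘ_mem : ∀ s ∈ Ico (0 : ℝ) (0 + 2), Θ s ∈ Icc 0 Real.pi := fun s hs => by
      have hlow := hΘ_mono.monotone hs.1
      have hhigh := hΘ_mono.monotone hs.2.le
      rw [hΘ0] at hlow
      rw [hΘ2, hΘ0, zero_add] at hhigh
      exact ⟨hlow, hhigh⟩
    exact hΘ_mono.injective (Real.injOn_cos (hΘ_mem t ht) (hΘ_mem 1 (by norm_num)) hcos)
  refine ⟨p, ⟨isSOP_of_antiperiodic one_lt_two hsol hanti hp1 hzero, ?_, fun t => ?_⟩, fun t => ?_⟩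
  · convert minPeriod_two_mul_of_antiperiodic two_pos hanti hp1 hzero using 1
    norm_num
  · rw [← hanti (t - 2), sub_add_cancel]
  · refine hσ.abs_map_le ?_
    rw [abs_mul, abs_of_pos hR]
    exact mul_le_of_le_one_right hR.le (Real.abs_cos_le_one _)

end IsStraightening

lemma IsKY.congr {f g p : ℝ → ℝ} (hp : IsKY g p) (hfg : ∀ t, f (p t) = g (p t)) : IsKY f p :=
  ⟨⟨fun t => by rw [hfg]; exact hp.1.1 t, hp.1.2⟩, hp.2⟩

lemma exists_gain_of_negative_feedback {f : ℝ → ℝ} {N : ℝ} (hf : Continuous f) (hodd : f.Odd)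
    (hneg : ∀ x, x ≠ 0 → x * f x < 0) (hN : 0 < N) (hderiv : deriv f 0 < 0) :
    ∃ (ℓ : ℝ → ℝ) (ε : ℝ), Continuous ℓ ∧ ℓ.Even ∧ 0 < ε ∧ (∀ x, ε ≤ ℓ x) ∧
      ℓ 0 = -deriv f 0 ∧ ∀ x, |x| ≤ N → -(x * ℓ x) = f x := by
  have hslope : Continuous (dslope f 0) := continuous_iff_continuousAt.mpr fun x => by
    rcases eq_or_ne x 0 with rfl | hx
    · exact continuousAt_dslope_same.mpr (differentiableAt_of_deriv_ne_zero hderiv.ne)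
    · exact (continuousAt_dslope_of_ne hx).mpr hf.continuousAt
  have hmul : ∀ x, x * dslope f 0 x = f x := fun x => by
    simpa [hodd.map_zero] using sub_smul_dslope f 0 x
  have hslope_neg : ∀ x, dslope f 0 x < 0 := fun x => by
    rcases eq_or_ne x 0 with rfl | hx
    · rwa [dslope_same]
    · have := hneg x hx
      rw [← hmul x, ← mul_assoc] at this
      exact neg_of_mul_neg_right this (mul_self_nonneg x)
  have hslope_even : ∀ x, dslope f 0 |x| = dslope f 0 x := fun x => by
    rcases eq_or_ne x 0 with rfl | hx
    · rw [abs_zero]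
    · refine abs_cases x |>.elim (fun h => by rw [h.1]) fun h => ?_
      rw [h.1]
      refine mul_left_cancel₀ hx ?_
      linarith [hmul x, hmul (-x), hodd x]
  obtain ⟨y, -, hy⟩ := isCompact_Icc.exists_isMaxOn (nonempty_Icc.mpr hN.le) hslope.continuousOn
  -- Freezing the gain outside `[-N, N]` bounds it away from zero without assumptions on `f` there.
  refine ⟨fun x => -dslope f 0 (min |x| N), -dslope f 0 y, by fun_prop,
    fun x => by simp only [abs_neg], neg_pos.mpr (hslope_neg y),
    fun x => neg_le_neg (hy ⟨le_min (abs_nonneg x) hN.le, min_le_right _ _⟩), by simp [hN.le],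
    fun x hx => ?_⟩
  simp only [min_eq_left hx, hslope_even, mul_neg, neg_neg, hmul]

lemma exists_isKY_of_deriv_lt {f : ℝ → ℝ} {N : ℝ} (hf : Continuous f) (hodd : f.Odd)
    (hneg : ∀ x, x ≠ 0 → x * f x < 0) (hunstable : deriv f 0 < -(Real.pi / 2)) (hN : 0 < N)
    (hbound : ∀ x ∈ Icc 0 N, |f x| ≤ N) : ∃ p, IsKY f p := by
  obtain ⟨ℓ, ε, hℓ, heven, hεpos, hε, hℓ0, hfℓ⟩ :=
    exists_gain_of_negative_feedback hf hodd hneg hN (by linarith [Real.pi_pos])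
  obtain ⟨σ, m, hσ⟩ := exists_isStraightening hℓ heven hεpos hε
  have hℓN : ∀ x ∈ Icc 0 N, x * ℓ x ≤ N := fun x hx => by
    have := hfℓ x (by rw [abs_of_nonneg hx.1]; exact hx.2)
    linarith [neg_le_of_abs_le (hbound x hx)]
  obtain ⟨R, hR, hRN, hquarter⟩ := hσ.exists_quarterPeriod_eq_one hN hℓN (by linarith)
  obtain ⟨p, hp, hpR⟩ := hσ.exists_isKY hR hquarter
  exact ⟨p, hp.congr fun t => (hfℓ _ ((hpR t).trans hRN)).symm⟩

/-! ### A solution of period greater than four -/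

section IntegralBounds

variable {f : ℝ → ℝ} {r s v y A γ : ℝ}

lemma integral_mem_Icc_of_forall_mem_Icc {m M : ℝ} (hf : Continuous f) (hrs : r ≤ s)
    (hfm : ∀ u ∈ Icc r s, f u ∈ Icc m M) :
    ∫ u in r..s, f u ∈ Icc (m * (s - r)) (M * (s - r)) := by
  have hint : IntervalIntegrable f MeasureTheory.volume r s := hf.intervalIntegrable r s
  have hlow := intervalIntegral.integral_mono_on hrs intervalIntegrable_const hint
    fun u hu => (hfm u hu).1
  have hhigh := intervalIntegral.integral_mono_on hrs hint intervalIntegrable_const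
    fun u hu => (hfm u hu).2
  rw [intervalIntegral.integral_const, smul_eq_mul, mul_comm] at hlow hhigh
  exact ⟨hlow, hhigh⟩

lemma integral_abs_left_of_odd (hf : Continuous f) (hodd : f.Odd) (y v : ℝ) :
    ∫ u in |y|..v, f u = ∫ u in y..v, f u := by
  have hsymm : ∫ u in y..(-y), f u = 0 := by
    have hneg := intervalIntegral.integral_comp_neg (a := y) (b := -y) f
    simp only [hodd _, intervalIntegral.integral_neg, neg_neg] at hneg
    linarith
  rcases abs_choice y with hy | hy
  · rw [hy]
  · rw [hy, ← intervalIntegral.integral_add_adjacent_intervals (hf.intervalIntegrable y (-y))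
      (hf.intervalIntegrable (-y) v), hsymm, zero_add]

lemma integral_mem_Icc_of_odd (hf : Continuous f) (hodd : f.Odd)
    (hfγ : ∀ u ∈ Icc 0 A, f u ∈ Icc (-γ) 0) (hγ : 0 ≤ γ) (hv : v ∈ Icc 0 A) (hy : |y| ≤ A) :
    ∫ u in y..v, f u ∈ Icc (-(γ * v)) (γ * (A - v)) := by
  have hy0 := abs_nonneg y
  have hγv := mul_nonneg hγ hv.1
  have hγA := mul_nonneg hγ (sub_nonneg.mpr hv.2)
  rw [← integral_abs_left_of_odd hf hodd]
  rcases le_total |y| v with hyv | hvy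
  · have hint := integral_mem_Icc_of_forall_mem_Icc hf hyv fun u hu =>
      hfγ u ⟨hy0.trans hu.1, hu.2.trans hv.2⟩
    have hγy := mul_nonneg hγ hy0
    exact ⟨by linarith [hint.1], by linarith [hint.2]⟩
  · have hint := integral_mem_Icc_of_forall_mem_Icc hf hvy fun u hu =>
      hfγ u ⟨hv.1.trans hu.1, hu.2.trans hy⟩
    have hγy := mul_le_mul_of_nonneg_left hy hγ
    rw [intervalIntegral.integral_symm]
    exact ⟨by linarith [hint.2], by linarith [hint.1]⟩

end IntegralBounds

namespace IsSolOn

variable {f x : ℝ → ℝ} {a b v δ γ : ℝ}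

lemma mem_Icc_and_fast_descent_of_slow_descent (hx : IsSolOn f x)
    (hfγ : ∀ y ∈ Icc 0 (2 * a), f y ∈ Icc (-γ) 0)
    (hmid : ∀ y ∈ Icc a (2 * a - δ * b), f y = -γ) (hδ : 0 < δ) (hγ : 0 ≤ γ) (hb : 0 ≤ b)
    (hb1 : b ≤ 1) (hbγ : δ + b * γ ≤ a) (hpast : ∀ t ∈ Icc (-1) 0, x t = 2 * a - δ * (t + 1)) :
    (∀ t ∈ Icc (-1) b, x t ∈ Icc a (2 * a)) ∧ ∀ t ∈ Icc b (b + 1), x t = x b - γ * (t - b) := by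
  have hpast_mem : ∀ t ∈ Icc (-1) 0, x t ∈ Icc a (2 * a) := fun t ht => by
    rw [hpast t ht]
    have := mul_nonneg hb hγ
    exact ⟨by nlinarith [ht.2], by nlinarith [ht.1]⟩
  have hslow : ∀ t ∈ Icc 0 b, x t ∈ Icc a (2 * a - δ) := fun t ht => by
    have hx0 := hpast 0 (by norm_num)
    have hdiff := hx.sub_mem_Icc le_rfl ht.1 fun u hu =>
      hfγ _ (Icc_subset_Icc_left (by nlinarith) (hpast_mem u
        ⟨by linarith [hu.1], by linarith [hu.2, ht.2]⟩))
    have := mul_le_mul_of_nonneg_left ht.2 hγ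
    exact ⟨by linarith [hdiff.1], by linarith [hdiff.2]⟩
  refine ⟨fun t ht => ?_, fun t ht => ?_⟩
  · rcases le_total t 0 with ht0 | ht0
    · exact hpast_mem t ⟨ht.1, ht0⟩
    · exact Icc_subset_Icc_right (by linarith) (hslow t ⟨ht0, ht.2⟩)
  · rw [hx.eq_add_mul_of_forall_eq hb ht.1 fun u hu => hmid _ ?_]
    · ring
    rcases le_total u 0 with hu0 | hu0
    · have hu1 : -1 ≤ u := by linarith [hu.1]
      refine ⟨(hpast_mem u ⟨hu1, hu0⟩).1, ?_⟩
      rw [hpast u ⟨hu1, hu0⟩]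
      nlinarith [hu.1]
    · exact Icc_subset_Icc_right (by nlinarith) (hslow u ⟨hu0, by linarith [hu.2, ht.2]⟩)

/-- On the fast descent the integral of the equation is `γ⁻¹ ∫ f` over the values passed. -/
lemma mem_Icc_of_fast_descent (hx : IsSolOn f x) (hf : Continuous f) (hodd : f.Odd)
    (hfγ : ∀ y ∈ Icc 0 (2 * a), f y ∈ Icc (-γ) 0) (hγ : 0 < γ) (hγa : 4 * a ≤ γ)
    (hv : v ∈ Icc 0 (2 * a)) (hpast : ∀ t ∈ Icc (-1) 0, x t = v - γ * (t + 1)) {t : ℝ}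
    (ht : t ∈ Icc 0 ((v + 2 * a) / γ)) : x t ∈ Icc (-γ) (-(2 * a)) := by
  have hγt : γ * t ≤ v + 2 * a := by
    rw [mul_comm]
    exact (le_div_iff₀ hγ).mp ht.2
  have ht1 : t ≤ 1 := ht.2.trans ((div_le_one hγ).mpr (by linarith [hv.2]))
  have hsubst : ∫ u in 0..t, f (x (u - 1)) = γ⁻¹ * ∫ y in (v - γ * t)..v, f y := by
    calc ∫ u in 0..t, f (x (u - 1)) = ∫ u in 0..t, f (v - γ * u) := by
          refine intervalIntegral.integral_congr fun u hu => ?_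
          rw [uIcc_of_le ht.1] at hu
          simp only [hpast (u - 1) ⟨by linarith [hu.1], by linarith [hu.2]⟩, sub_add_cancel]
      _ = γ⁻¹ * ∫ y in (v - γ * t)..v, f y := by
          rw [intervalIntegral.integral_comp_sub_mul _ hγ.ne', smul_eq_mul, mul_zero, sub_zero]
  have hγt0 := mul_nonneg hγ.le ht.1
  have hint := integral_mem_Icc_of_odd hf hodd hfγ hγ.le hv
    (abs_le.mpr ⟨by linarith, by linarith [hv.2]⟩ : |v - γ * t| ≤ 2 * a)
  have hlow := mul_le_mul_of_nonneg_left hint.1 (inv_nonneg.mpr hγ.le)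
  have hhigh := mul_le_mul_of_nonneg_left hint.2 (inv_nonneg.mpr hγ.le)
  rw [mul_neg, inv_mul_cancel_left₀ hγ.ne'] at hlow
  rw [inv_mul_cancel_left₀ hγ.ne'] at hhigh
  rw [hx.eq_add_integral hf le_rfl ht.1, hpast 0 (by norm_num), hsubst]
  exact ⟨by linarith, by linarith⟩

lemma exists_climb_of_fast_descent (hx : IsSolOn f x) (hf : Continuous f) (hodd : f.Odd)
    (hfγ : ∀ y ∈ Icc 0 (2 * a), f y ∈ Icc (-γ) 0)
    (hfar : ∀ y ∈ Icc (-γ) (-(2 * a)), f y = δ) (hδ : 0 < δ) (hγ : 0 < γ) (hγa : 4 * a ≤ γ)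
    (hv : v ∈ Ioc 0 (2 * a)) (hpast : ∀ t ∈ Icc (-1) 0, x t = v - γ * (t + 1)) :
    ∃ e, 0 < e ∧ (∀ t ∈ Icc 0 e, x t ≤ -(2 * a)) ∧
      ∀ t ∈ Icc e (e + 1), x t = -(2 * a) + δ * (t - e) := by
  set τ := (v + 2 * a) / γ
  have hγτ : γ * τ = v + 2 * a := mul_div_cancel₀ _ hγ.ne'
  have hτ : 0 < τ := div_pos (by linarith [hv.1, hv.2]) hγ
  have hdeep : ∀ t ∈ Icc 0 τ, x t ∈ Icc (-γ) (-(2 * a)) := fun t ht =>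
    hx.mem_Icc_of_fast_descent hf hodd hfγ hγ hγa (Ioc_subset_Icc_self hv) hpast ht
  have hxτ := hdeep τ ⟨hτ.le, le_rfl⟩
  set e := τ + (-(2 * a) - x τ) / δ with he
  have hδe : δ * (e - τ) = -(2 * a) - x τ := by
    rw [he, add_sub_cancel_left, mul_div_cancel₀ _ hδ.ne']
  have hτe : τ ≤ e := le_add_of_nonneg_right (div_nonneg (by linarith [hxτ.2]) hδ.le)
  have hhist : ∀ t ∈ Icc (τ - 1) τ, x t ∈ Icc (-γ) (-(2 * a)) := fun t ht => by
    rcases le_total t 0 with ht0 | ht0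
    · rw [hpast t ⟨by linarith [ht.1], ht0⟩]
      exact ⟨by nlinarith [hv.1], by nlinarith [ht.1]⟩
    · exact hdeep t ⟨ht0, ht.2⟩
  have hline : ∀ t ∈ Icc τ e, x τ + δ * (t - τ) ∈ Icc (-γ) (-(2 * a)) := fun t ht =>
    ⟨by nlinarith [ht.1, hxτ.1], by nlinarith [ht.2]⟩
  have hclimb : ∀ t ∈ Icc τ (e + 1), x t = x τ + δ * (t - τ) := fun t ht =>
    hx.eq_add_mul_of_line_subset hτ.le hfar hhist hline ht
  refine ⟨e, hτ.trans_le hτe, fun t ht => ?_, fun t ht => ?_⟩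
  · rcases le_total t τ with htτ | htτ
    · exact (hdeep t ⟨ht.1, htτ⟩).2
    · rw [hclimb t ⟨htτ, by linarith [ht.2]⟩]
      exact (hline t ⟨htτ, ht.2⟩).2
  · rw [hclimb t ⟨hτe.trans ht.1, ht.2⟩]
    linarith

lemma exists_half_period_two_lt (hx : IsSolOn f x) (hf : Continuous f) (hodd : f.Odd)
    (hfγ : ∀ y ∈ Icc 0 (2 * a), f y ∈ Icc (-γ) 0)
    (hmid : ∀ y ∈ Icc a (2 * a - δ * b), f y = -γ)
    (hfar : ∀ y ∈ Icc (-γ) (-(2 * a)), f y = δ) (hδ : 0 < δ) (hb : 0 ≤ b)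
    (hbγ : δ + b * γ ≤ a) (ha : 0 < a) (hγa : 4 * a ≤ γ)
    (hpast : ∀ t ∈ Icc (-1) 0, x t = 2 * a - δ * (t + 1)) :
    ∃ h z, 2 < h ∧ (∀ t, -1 ≤ t → x (t + h) = -x t) ∧ -1 ≤ z ∧ x z = 0 ∧
      ∀ t ∈ Ico (-1) (-1 + h), x t = 0 → t = z := by
  have hγ : 0 < γ := by linarith
  have hb1 : b ≤ 1 := le_of_mul_le_mul_right (by linarith) hγ
  obtain ⟨hhigh, hfall⟩ :=
    hx.mem_Icc_and_fast_descent_of_slow_descent hfγ hmid hδ hγ.le hb hb1 hbγ hpast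
  have hxb := hhigh b ⟨by linarith, le_rfl⟩
  have hfall_shift : ∀ t ∈ Icc (-1) 0, x (t + (b + 1)) = x b - γ * (t + 1) := fun t ht => by
    rw [hfall _ ⟨by linarith [ht.1], by linarith [ht.2]⟩]
    ring
  obtain ⟨e, he, hlow, hclimb⟩ := (hx.shift (s := b + 1) (by linarith)).exists_climb_of_fast_descent
    hf hodd hfγ hfar hδ hγ hγa ⟨by linarith [hxb.1], hxb.2⟩ hfall_shift
  have hanti_past : ∀ t ∈ Icc (-1) 0, x (t + (b + e + 2)) = -x t := fun t ht => by
    have := hclimb (t + 1 + e) ⟨by linarith [ht.1], by linarith [ht.2]⟩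
    rw [hpast t ht, show t + (b + e + 2) = t + 1 + e + (b + 1) by ring, this]
    ring
  have hb_div : x b / γ ∈ Icc 0 1 := ⟨div_nonneg (by linarith [hxb.1]) hγ.le,
    (div_le_one hγ).mpr (by linarith [hxb.2])⟩
  refine ⟨b + e + 2, b + x b / γ, by linarith, fun t ht => ?_, by linarith [hb_div.1], ?_,
    fun t ht hxt => ?_⟩
  · exact (hx.shift (by linarith)).eqOn_Ici hf (hx.neg hodd) hanti_past ht
  · rw [hfall _ ⟨by linarith [hb_div.1], by linarith [hb_div.2]⟩]
    field_simp
    ring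
  · rcases le_total t b with htb | hbt
    · linarith [(hhigh t ⟨ht.1, htb⟩).1]
    rcases le_total t (b + 1) with htb1 | hbt1
    · rw [hfall t ⟨hbt, htb1⟩] at hxt
      field_simp
      linarith
    · have := hlow (t - (b + 1)) ⟨by linarith, by linarith [ht.2]⟩
      rw [sub_add_cancel] at this
      linarith

end IsSolOn

lemma exists_isSOP_four_lt_period {f : ℝ → ℝ} {a c δ γ : ℝ} (ha : 0 < a) (hc : 0 < c)
    (hδ : 0 < δ) (hγa : 4 * a ≤ γ) (hiii : δ + c / δ * γ ≤ a) (hf : Continuous f)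
    (hneg : ∀ x, x ≠ 0 → x * f x < 0) (hf'' : HypH'' f a c δ γ) :
    ∃ (p : ℝ → ℝ) (T : ℝ), IsSOP f p ∧ MinPeriod p T ∧ 4 < T := by
  obtain ⟨hodd, hbound, hmid, hfar⟩ := hf''
  have hfγ : ∀ y ∈ Icc 0 (2 * a), f y ∈ Icc (-γ) 0 := fun y hy => by
    refine ⟨neg_le_of_abs_le (hbound y hy), ?_⟩
    rcases hy.1.eq_or_lt with rfl | hy0
    · exact (Function.Odd.map_zero hodd).le
    · exact (neg_of_mul_neg_right (hneg y hy0.ne') hy0.le).le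
  have hfar_neg : ∀ y ∈ Icc (-γ) (-(2 * a)), f y = δ := fun y hy => by
    have := hfar (-y) ⟨by linarith [hy.2], by linarith [hy.1]⟩
    rw [hodd] at this
    linarith
  obtain ⟨x, hx, hpast⟩ := exists_isSolOn hf (φ := fun t => 2 * a - δ * (t + 1)) (by fun_prop)
  obtain ⟨h, z, hh, hanti, hz, hxz, hzero⟩ := hx.exists_half_period_two_lt hf hodd hfγ
    (by rwa [mul_div_cancel₀ _ hδ.ne']) hfar_neg hδ (div_pos hc hδ).le
    hiii ha hγa hpast
  obtain ⟨p, hsol, hp_anti, hpx⟩ := hx.exists_antiperiodic_extension (by linarith) hanti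
  have hpz : p z = 0 := (hpx hz).trans hxz
  have hp_zero : ∀ t ∈ Ico (-1) (-1 + h), p t = 0 → t = z := fun t ht hpt =>
    hzero t ht ((hpx ht.1).symm.trans hpt)
  exact ⟨p, 2 * h, isSOP_of_antiperiodic (by linarith) hsol hp_anti hpz hp_zero,
    minPeriod_two_mul_of_antiperiodic (by linarith) hp_anti hpz hp_zero, by linarith⟩

theorem statement_14_general (f : ℝ → ℝ) (a c δ γ : ℝ) (ha : 0 < a) (hc : 0 < c) (hδ : 0 < δ)
    (hγa : 4 * a ≤ γ) (hiii : δ + c / δ * γ ≤ a) (hf : Continuous f)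
    (hneg : ∀ x : ℝ, x ≠ 0 → x * f x < 0) (hf'' : HypH'' f a c δ γ)
    (hunstable : deriv f 0 < -(Real.pi / 2)) :
    (∃ (p : ℝ → ℝ) (T : ℝ), IsSOP f p ∧ MinPeriod p T ∧ 4 < T) ∧
      ∃ x : ℝ → ℝ, IsKY f x := by
  refine ⟨exists_isSOP_four_lt_period ha hc hδ hγa hiii hf hneg hf'', ?_⟩
  obtain ⟨hodd, hbound, -, hfar⟩ := hf''
  have hδγ : δ ≤ γ := by
    have : 0 ≤ c / δ * γ := mul_nonneg ((div_pos hc hδ).le) (by linarith)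
    linarith
  refine exists_isKY_of_deriv_lt (N := γ) hf hodd hneg hunstable (by linarith) fun x hx => ?_
  rcases le_total x (2 * a) with hxa | hax
  · exact hbound x ⟨hx.1, hxa⟩
  · rwa [hfar x ⟨hax, hx.2⟩, abs_neg, abs_of_pos hδ]

theorem statement_14 (f : ℝ → ℝ) (a c δ γ : ℝ)
    (ha : 0 < a) (hc : 0 < c) (hδ : 0 < δ) (hγ : 0 < γ)
    (hi : c < min a δ) (hii : 4 * a ≤ γ ∧ δ < γ) (hiii : δ + (c / δ) * γ ≤ a)
    (hH : HypH f) (hH'' : HypH'' f a c δ γ)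
    (hlip : LocallyLipschitz f)
    (hconst : ∃ ρ : ℝ, 0 < ρ ∧ ∀ x : ℝ, ρ ≤ x → f x = f ρ)
    (hunstable : deriv f 0 < -(Real.pi / 2)) :
    (∃ (p : ℝ → ℝ) (T : ℝ), IsSOP f p ∧ MinPeriod p T ∧ 4 < T) ∧
      ∃ x : ℝ → ℝ, IsKY f x :=
  statement_14_general f a c δ γ ha hc hδ hii.1 hiii
    hH.1 hH.2.1 hH'' hunstable
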